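/- Define, for nonnegative integers i and j, the functions P_i(x,y) = Σ_{α+β=x+y+1, α,β≥1} α·β·q_i(α) and P_{i,j}(x) = Σ_{α+β+γ=x+1, α,β,γ≥1} α·β·γ·q_i(α)·q_j(β), where q_d(ν) = S(ν+d,ν). Then: (1) P_i agrees, for all positive integer arguments, with a polynomial in (x,y) of total degree 2i+3, and for all integers a ≥ 0, b ≥ 0 with a+b ≥ 1 the coefficient of x^{2a+1}y^{2b} in P_{a+b−1} equals (2a+2b−1)!!/((2a+1)!·(2b)!); (2) P_{i,j} agrees, for all positive integer arguments, with a polynomial in x of degree 2i+2j+5, and for all integers a, b ≥ 0 the coefficient of x^{2a+2b+5} in P_{a,b} equals (2a+1)!!·(2b+1)!!/(2a+2b+5)!. -/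

import Mathlib

/-- The Stirling number of the second kind `S(p, q)`: the number of partitions of a
set with `p` elements into `q` nonempty blocks. -/
noncomputable def stirlingSecond (p q : ℕ) : ℕ :=
  Nat.card {P : Finpartition (Finset.univ : Finset (Fin p)) // P.parts.card = q}

/-- `q_d(ν) = S(ν+d, ν)`. -/
noncomputable def qd (d ν : ℕ) : ℕ := stirlingSecond (ν + d) ν

/-- `P_i(x, y) = Σ_{α+β = x+y+1, α,β ≥ 1} α·β·q_i(α)`. -/
noncomputable def POne (i x y : ℕ) : ℚ :=
  ∑ α ∈ Finset.Icc 1 (x + y), (α : ℚ) * ((x + y + 1 - α : ℕ) : ℚ) * (qd i α : ℚ)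

/-- `P_{i,j}(x) = Σ_{α+β+γ = x+1, α,β,γ ≥ 1} α·β·γ·q_i(α)·q_j(β)`. -/
noncomputable def PTwo (i j x : ℕ) : ℚ :=
  ∑ α ∈ Finset.Icc 1 x, ∑ β ∈ Finset.Icc 1 (x - α),
    (α : ℚ) * (β : ℚ) * ((x + 1 - α - β : ℕ) : ℚ) * (qd i α : ℚ) * (qd j β : ℚ)

/-!
The sums are controlled through top differences: a sequence whose `m`-th forward difference is
the constant `c` is a polynomial with leading term `c n ^ m / m!` by Newton's formula. If `f` and
`g` have constant differences `c` and `d` of orders `m` and `k`, then their Cauchy product has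
constant difference `c d` of order `m + k + 1`. The Stirling recurrence reads
`q_{d+1}(n+1) - q_{d+1}(n) = (n+1) q_d(n+1)`, so the difference of order `2d+1` of `n q_d(n)` is
`(2d+1)‼`. Both `P_i` and `P_{i,j}` are Cauchy products of such sequences with `n + 1`, and the
coefficients of `P_i`, which depends only on `x + y`, follow by expanding `(x + y) ^ (2i+3)`.

The recurrence itself needs the partition-counting definition of `S(p, q)`: partitions are
counted as equivalence relations, and a relation on `Option α` is a relation on `α` together
with the class, if any, joined by the new point.
-/

section EquivalenceRelations

variable {α : Type*}

theorem card_quotient_ker {β : Type*} (f : α → β) :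
    Nat.card (Quotient (Setoid.ker f)) = (Set.range f).ncard :=
  Nat.card_congr (Setoid.quotientKerEquivRange f)

/-- The number of equivalence relations on `α` with exactly `k` classes. Counting set partitions
this way turns the Stirling recurrence into a statement about extending a relation from `α` to
`Option α`. -/
noncomputable def setoidCount (α : Type*) (k : ℕ) : ℕ :=
  Nat.card {s : Setoid α // Nat.card (Quotient s) = k}

/-- The extension of an equivalence relation on `α` to `Option α` in which the new point `none`
joins the class `o`, or forms a class of its own when `o = none`. -/
def extendSetoid (s : Setoid α) (o : Option (Quotient s)) : Setoid (Option α) :=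
  Setoid.ker fun x : Option α => x.elim o fun a => some (Quotient.mk s a)

theorem extendSetoid_some_some {s : Setoid α} {o : Option (Quotient s)} {a b : α} :
    extendSetoid s o (some a) (some b) ↔ s a b :=
  Option.some_inj.trans (Quotient.eq (r := s))

theorem extendSetoid_none_some {s : Setoid α} {o : Option (Quotient s)} {b : α} :
    extendSetoid s o none (some b) ↔ o = some (Quotient.mk s b) :=
  Iff.rfl

theorem setoid_option_ext {r r' : Setoid (Option α)}
    (hsome : ∀ a b : α, r (some a) (some b) ↔ r' (some a) (some b))
    (hnone : ∀ b : α, r none (some b) ↔ r' none (some b)) : r = r' := by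
  ext (_ | a) (_ | b)
  · exact iff_of_true (r.refl' _) (r'.refl' _)
  · exact hnone b
  · rw [r.comm', r'.comm', hnone]
  · exact hsome a b

theorem bijective_extendSetoid :
    Function.Bijective fun x : Σ s : Setoid α, Option (Quotient s) => extendSetoid x.1 x.2 := by
  constructor
  · rintro ⟨s, o⟩ ⟨t, p⟩ (h : extendSetoid s o = extendSetoid t p)
    obtain rfl : s = t := Setoid.ext fun a b => by
      rw [← extendSetoid_some_some (o := o), h, extendSetoid_some_some]
    have hop (b : α) : o = some (Quotient.mk s b) ↔ p = some (Quotient.mk s b) := by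
      rw [← extendSetoid_none_some, h, extendSetoid_none_some]
    congr 1
    ext q
    exact q.inductionOn hop
  · intro r
    by_cases h : ∃ b, r none (some b)
    · obtain ⟨b, hb⟩ := h
      refine ⟨⟨r.comap some, some (Quotient.mk _ b)⟩, setoid_option_ext
        (fun _ _ => extendSetoid_some_some) fun c => extendSetoid_none_some.trans ?_⟩
      rw [Option.some_inj, Quotient.eq]
      exact ⟨fun hbc => r.trans' hb hbc, fun hc => r.trans' (r.symm' hb) hc⟩
    · refine ⟨⟨r.comap some, none⟩, setoid_option_ext
        (fun _ _ => extendSetoid_some_some) fun c => extendSetoid_none_some.trans ?_⟩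
      exact iff_of_false (by simp only [reduceCtorEq, not_false_eq_true]) (not_exists.mp h c)

theorem card_quotient_extendSetoid (s : Setoid α) (o : Option (Quotient s)) :
    Nat.card (Quotient (extendSetoid s o)) = (insert o (Set.range some)).ncard := by
  rw [extendSetoid, card_quotient_ker, Option.range_elim]
  congr 2
  exact Quotient.mk_surjective.range_comp some

theorem card_quotient_extendSetoid_some (s : Setoid α) (q : Quotient s) :
    Nat.card (Quotient (extendSetoid s (some q))) = Nat.card (Quotient s) := by
  rw [card_quotient_extendSetoid, Set.insert_eq_of_mem (Set.mem_range_self q), ← Set.image_univ,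
    Set.ncard_image_of_injective _ (Option.some_injective _), Set.ncard_univ]

theorem card_quotient_extendSetoid_none (s : Setoid α) [Finite (Quotient s)] :
    Nat.card (Quotient (extendSetoid s none)) = Nat.card (Quotient s) + 1 := by
  rw [card_quotient_extendSetoid, Set.insert_none_range_some, Set.ncard_univ, Finite.card_option]

theorem setoidCount_congr {β : Type*} (e : α ≃ β) (k : ℕ) :
    setoidCount α k = setoidCount β k := by
  have hbij : Function.Bijective (Setoid.comap e) :=
    ⟨Setoid.comap_injective e e.surjective, fun s =>
      ⟨s.comap e.symm, Setoid.ext fun a b => by simp only [Setoid.comap_rel, e.symm_apply_apply]⟩⟩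
  refine (Nat.card_congr ((Equiv.ofBijective _ hbij).subtypeEquiv fun s => ?_)).symm
  rw [Equiv.ofBijective_apply, Setoid.comap_eq, card_quotient_ker,
    (Quotient.mk_surjective.comp e.surjective).range_eq, Set.ncard_univ]

open Classical in
theorem setoidCount_option_succ [Finite α] (k : ℕ) :
    setoidCount (Option α) (k + 1) = (k + 1) * setoidCount α (k + 1) + setoidCount α k := by
  have : Finite (Setoid α) := .of_injective (fun s : Setoid α => s.r) fun s t h =>
    Setoid.ext fun a b => iff_of_eq (congrFun₂ h a b)
  have : Fintype (Setoid α) := .ofFinite _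
  have (s : Setoid α) : Fintype (Quotient s) := .ofFinite _
  have hext : setoidCount (Option α) (k + 1) =
      Nat.card {x : Σ s : Setoid α, Option (Quotient s) //
        Nat.card (Quotient (extendSetoid x.1 x.2)) = k + 1} :=
    (Nat.card_congr ((Equiv.ofBijective _ bijective_extendSetoid).subtypeEquiv
      fun _ => Iff.rfl)).symm
  have hclasses (s : Setoid α) :
      (∑ o : Option (Quotient s),
        if Nat.card (Quotient (extendSetoid s o)) = k + 1 then 1 else 0) =
      (k + 1) * (if Nat.card (Quotient s) = k + 1 then 1 else 0) +
        if Nat.card (Quotient s) = k then 1 else 0 := by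
    rw [Fintype.sum_option]
    simp only [card_quotient_extendSetoid_none, card_quotient_extendSetoid_some,
      Finset.sum_const, Finset.card_univ, ← Nat.card_eq_fintype_card, Nat.add_right_cancel_iff]
    split_ifs <;> simp_all
  rw [hext, setoidCount, setoidCount, Nat.card_eq_fintype_card, Nat.card_eq_fintype_card,
    Nat.card_eq_fintype_card]
  simp only [Fintype.card_subtype, Finset.card_filter, Fintype.sum_sigma, hclasses,
    Finset.sum_add_distrib, Finset.mul_sum]

theorem setoidCount_zero [Nonempty α] [Finite α] : setoidCount α 0 = 0 := by
  rw [setoidCount, Nat.card_eq_zero]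
  refine .inl ⟨fun ⟨s, hs⟩ => ?_⟩
  have : Nonempty (Quotient s) := Nonempty.map (Quotient.mk s) inferInstance
  exact Nat.card_pos.ne' hs

theorem setoidCount_of_isEmpty [IsEmpty α] (k : ℕ) :
    setoidCount α k = Nat.stirlingSecond 0 k := by
  have : Subsingleton (Setoid α) := ⟨fun s t => Setoid.ext fun a => isEmptyElim a⟩
  cases k with
  | zero =>
    rw [setoidCount, Nat.stirlingSecond_zero, Nat.card_eq_one_iff_unique]
    exact ⟨inferInstance, ⟨⊥, Nat.card_of_isEmpty⟩⟩
  | succ k =>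
    rw [setoidCount, Nat.stirlingSecond_zero_succ, Nat.card_eq_zero]
    exact .inl ⟨fun s => by simpa using s.2⟩

theorem setoidCount_eq_stirlingSecond [Finite α] (k : ℕ) :
    setoidCount α k = Nat.stirlingSecond (Nat.card α) k := by
  induction α using Finite.induction_empty_option generalizing k with
  | of_equiv e ih => rw [← setoidCount_congr e, ih, Nat.card_congr e]
  | h_empty => rw [setoidCount_of_isEmpty, Nat.card_of_isEmpty]
  | h_option ih =>
    rw [Finite.card_option]
    cases k with
    | zero => rw [setoidCount_zero, Nat.stirlingSecond_succ_zero]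
    | succ k => rw [setoidCount_option_succ, ih, ih, Nat.stirlingSecond_succ_succ]

end EquivalenceRelations

section SetPartitions

variable {α : Type*} [Fintype α] [DecidableEq α]

theorem range_part (P : Finpartition (Finset.univ : Finset α)) :
    Set.range P.part = (P.parts : Set (Finset α)) := by
  refine (Set.range_subset_iff.mpr fun a => P.part_mem.mpr (Finset.mem_univ a)).antisymm ?_
  simpa [Set.SurjOn] using P.part_surjOn

theorem ker_part_iff {P : Finpartition (Finset.univ : Finset α)} {a b : α} :
    Setoid.ker P.part a b ↔ b ∈ P.part a := by
  rw [Setoid.ker_def, eq_comm,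
    P.mem_part_iff_part_eq_part (Finset.mem_univ b) (Finset.mem_univ a)]

theorem bijective_ker_part :
    Function.Bijective fun P : Finpartition (Finset.univ : Finset α) => Setoid.ker P.part := by
  classical
  constructor
  · intro P P' h
    have hpart : P.part = P'.part := funext fun a => Finset.ext fun b => by
      rw [← ker_part_iff, ← ker_part_iff]
      exact Setoid.ext_iff.mp h a b
    exact Finpartition.ext (by exact_mod_cast range_part P ▸ hpart ▸ range_part P')
  · exact fun s => ⟨Finpartition.ofSetoid s, Setoid.ext fun a b =>
      ker_part_iff.trans Finpartition.mem_part_ofSetoid_iff_rel⟩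

theorem card_finpartition_card_parts_eq_setoidCount (k : ℕ) :
    Nat.card {P : Finpartition (Finset.univ : Finset α) // P.parts.card = k} =
      setoidCount α k :=
  Nat.card_congr ((Equiv.ofBijective _ bijective_ker_part).subtypeEquiv fun P => by
    rw [Equiv.ofBijective_apply, card_quotient_ker, range_part, Set.ncard_coe_finset])

theorem stirlingSecond_eq (p q : ℕ) : stirlingSecond p q = Nat.stirlingSecond p q := by
  rw [stirlingSecond, card_finpartition_card_parts_eq_setoidCount, setoidCount_eq_stirlingSecond,
    Nat.card_eq_fintype_card, Fintype.card_fin]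

end SetPartitions

section TopDifference

open Finset
open scoped Nat

section AddCommGroup

variable {M : Type*} [AddCommGroup M] {f g : ℕ → M} {m k : ℕ} {c d : M}

/-- The `m`-th forward difference of the sequence `f` is the constant `c`. Over a field of
characteristic zero this means that `f` is a polynomial function of degree at most `m` whose
coefficient of `n ^ m` is `c / m!`. -/
def HasTopDiff (f : ℕ → M) (m : ℕ) (c : M) : Prop :=
  ∀ n, (fwdDiff 1)^[m] f n = c

theorem hasTopDiff_succ_iff :
    HasTopDiff f (m + 1) c ↔ HasTopDiff (fun n => f (n + 1) - f n) m c :=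
  Iff.rfl

namespace HasTopDiff

theorem add (hf : HasTopDiff f m c) (hg : HasTopDiff g m d) :
    HasTopDiff (fun n => f n + g n) m (c + d) := fun n => by
  rw [← hf n, ← hg n, ← Pi.add_apply, ← fwdDiff_iter_add]
  rfl

theorem comp_succ (hf : HasTopDiff f m c) : HasTopDiff (fun n => f (n + 1)) m c := fun n =>
  (fwdDiff_iter_comp_add 1 f 1 m n).trans (hf (n + 1))

theorem zero_of_lt (hf : HasTopDiff f m c) (hmk : m < k) : HasTopDiff f k 0 := by
  induction k, hmk using Nat.le_induction with
  | base =>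
    intro n
    rw [Function.iterate_succ_apply', fwdDiff, hf, hf, sub_self]
  | succ k _ ih =>
    intro n
    rw [Function.iterate_succ_apply', fwdDiff, ih, ih, sub_self]

theorem eq_sum_range_choose_nsmul (hf : HasTopDiff f m c) (n : ℕ) :
    f n = ∑ j ∈ range (m + 1), n.choose j • (fwdDiff 1)^[j] f 0 := by
  have hnewton : f n = ∑ j ∈ range (n + 1), n.choose j • (fwdDiff 1)^[j] f 0 := by
    simpa only [zero_add, smul_eq_mul, mul_one] using shift_eq_sum_fwdDiff_iter 1 f n 0
  rw [hnewton]
  obtain hnm | hmn := le_total n m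
  · refine sum_subset (range_mono (by lia)) fun j _ hj => ?_
    rw [Nat.choose_eq_zero_of_lt (by simpa using hj), zero_nsmul]
  · refine (sum_subset (range_mono (by lia)) fun j _ hj => ?_).symm
    rw [hf.zero_of_lt (by simpa using hj) 0, nsmul_zero]

end HasTopDiff

end AddCommGroup

section CommRing

variable {R : Type*} [CommRing R] {f g : ℕ → R} {m k : ℕ} {c d : R}

namespace HasTopDiff

theorem const_mul (hf : HasTopDiff f m c) (r : R) : HasTopDiff (fun n => r * f n) m (r * c) :=
  fun n => by
    rw [← hf n, ← smul_eq_mul, ← Pi.smul_apply, ← fwdDiff_iter_const_smul]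
    rfl

theorem natCast_mul (hf : HasTopDiff f m c) :
    HasTopDiff (fun n => (n : R) * f n) (m + 1) ((m + 1) * c) := by
  induction m generalizing f with
  | zero =>
    intro n
    have hconst (n : ℕ) : f n = c := hf n
    simp only [Function.iterate_succ_apply, Function.iterate_zero_apply, fwdDiff, hconst]
    push_cast
    ring
  | succ m ih =>
    rw [hasTopDiff_succ_iff]
    convert (ih (hasTopDiff_succ_iff.mp hf)).add hf.comp_succ using 2
    all_goals
      push_cast
      ring

end HasTopDiff

theorem hasTopDiff_natCast_succ : HasTopDiff (fun n => ((n + 1 : ℕ) : R)) 1 1 := fun n => by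
  simp only [Function.iterate_one, fwdDiff, Nat.cast_succ, add_sub_cancel_left]

/-- The Cauchy product of two sequences, i.e. the coefficient sequence of the product of their
generating functions. -/
def cauchyProduct (f g : ℕ → R) (n : ℕ) : R :=
  ∑ p ∈ antidiagonal n, f p.1 * g p.2

theorem cauchyProduct_eq_sum_Icc (hf : f 0 = 0) (n : ℕ) :
    cauchyProduct f g n = ∑ α ∈ Icc 1 n, f α * g (n - α) := by
  rw [cauchyProduct, Nat.sum_antidiagonal_eq_sum_range_succ fun i j => f i * g j,
    sum_range_succ', hf, zero_mul, add_zero, range_eq_Ico,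
    sum_Ico_add' (fun α => f α * g (n - α)) 0 n 1]
  rfl

theorem cauchyProduct_succ_sub (f g : ℕ → R) (n : ℕ) :
    cauchyProduct f g (n + 1) - cauchyProduct f g n =
      g 0 * f (n + 1) + cauchyProduct f (fun n => g (n + 1) - g n) n := by
  simp only [cauchyProduct, Nat.sum_antidiagonal_succ', mul_sub, sum_sub_distrib]
  ring

theorem HasTopDiff.cauchyProduct (hf : HasTopDiff f m c) (hg : HasTopDiff g k d) :
    HasTopDiff (cauchyProduct f g) (m + k + 1) (c * d) := by
  induction k generalizing g with
  | zero =>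
    have hconst (n : ℕ) : g n = d := hg n
    rw [hasTopDiff_succ_iff]
    convert hf.comp_succ.const_mul d using 1
    · ext n
      rw [cauchyProduct_succ_sub]
      simp only [hconst, sub_self, _root_.cauchyProduct, mul_zero, sum_const_zero, add_zero]
    · exact mul_comm c d
  | succ k ih =>
    have hfirst : HasTopDiff (fun n => g 0 * f (n + 1)) (m + k + 1) 0 :=
      (hf.comp_succ.const_mul (g 0)).zero_of_lt (by lia)
    have hsum := hfirst.add (ih (hasTopDiff_succ_iff.mp hg))
    rw [zero_add] at hsum
    rw [← add_assoc m, hasTopDiff_succ_iff]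
    simpa only [cauchyProduct_succ_sub] using hsum

end CommRing

theorem HasTopDiff.exists_polynomial {K : Type*} [Field K] [CharZero K] {f : ℕ → K} {m : ℕ}
    {c : K} (hf : HasTopDiff f m c) :
    ∃ p : Polynomial K, p.natDegree ≤ m ∧ p.coeff m = c / m ! ∧ ∀ n : ℕ, p.eval (n : K) = f n := by
  let newtonTerm (j : ℕ) : Polynomial K :=
    Polynomial.C ((fwdDiff 1)^[j] f 0 / j !) * descPochhammer K j
  have hdeg (j : ℕ) : (newtonTerm j).natDegree ≤ j :=
    (Polynomial.natDegree_C_mul_le _ _).trans (descPochhammer_natDegree K j).le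
  refine ⟨∑ j ∈ range (m + 1), newtonTerm j, ?_, ?_, ?_⟩
  · exact Polynomial.natDegree_sum_le_of_forall_le _ _ fun j hj =>
      (hdeg j).trans (mem_range_succ_iff.mp hj)
  · have hmonic : (descPochhammer K m).coeff m = 1 := by
      simpa only [descPochhammer_natDegree] using (monic_descPochhammer K m).coeff_natDegree
    rw [Polynomial.finsetSum_coeff, sum_range_succ, sum_eq_zero fun j hj =>
      Polynomial.coeff_eq_zero_of_natDegree_lt ((hdeg j).trans_lt (mem_range.mp hj)),
      zero_add, Polynomial.coeff_C_mul, hmonic, mul_one, hf]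
  · intro n
    rw [Polynomial.eval_finsetSum, hf.eq_sum_range_choose_nsmul n]
    refine sum_congr rfl fun j _ => ?_
    rw [Polynomial.eval_C_mul, descPochhammer_eval_eq_descFactorial,
      Nat.descFactorial_eq_factorial_mul_choose, nsmul_eq_mul]
    have := Nat.factorial_ne_zero j
    push_cast
    field_simp

end TopDifference

section BivariatePolynomials

open MvPolynomial

variable {R : Type*} [CommSemiring R]

theorem coeff_aeval_X_add_X (p : Polynomial R) (d : Fin 2 →₀ ℕ) :
    coeff d (p.aeval (X 0 + X 1 : MvPolynomial (Fin 2) R)) =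
      p.coeff (d 0 + d 1) * ((d 0 + d 1).choose (d 0) : ℕ) := by
  have hpow (n : ℕ) : coeff d ((X 0 + X 1 : MvPolynomial (Fin 2) R) ^ n) =
      if d 0 + d 1 = n then (((d 0 + d 1).choose (d 0) : ℕ) : R) else 0 := by
    rw [coeff_add_pow]
    by_cases h : d 0 + d 1 = n <;> simp [h]
  rw [Polynomial.aeval_eq_sum_range, coeff_sum]
  simp only [coeff_smul, hpow, smul_eq_mul, mul_ite, mul_zero, Finset.sum_ite_eq,
    Finset.mem_range_succ_iff]
  exact ite_eq_left_iff.mpr fun h => by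
    rw [Polynomial.coeff_eq_zero_of_natDegree_lt (not_le.mp h), zero_mul]

theorem totalDegree_aeval_X_add_X (p : Polynomial R) :
    (p.aeval (X 0 + X 1 : MvPolynomial (Fin 2) R)).totalDegree = p.natDegree := by
  have hsum (d : Fin 2 →₀ ℕ) : (d.sum fun _ e => e) = d 0 + d 1 := by
    rw [d.sum_fintype _ fun _ => rfl, Fin.sum_univ_two]
  apply le_antisymm
  · refine Finset.sup_le fun d hd => ?_
    rw [mem_support_iff, coeff_aeval_X_add_X] at hd
    exact (hsum d).trans_le (Polynomial.le_natDegree_of_ne_zero (left_ne_zero_of_mul hd))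
  · obtain rfl | hp := eq_or_ne p 0
    · simp only [Polynomial.natDegree_zero, zero_le]
    · have hmem : Finsupp.single 0 p.natDegree ∈
          (p.aeval (X 0 + X 1 : MvPolynomial (Fin 2) R)).support := by
        simpa [coeff_aeval_X_add_X] using hp
      simpa using le_totalDegree hmem

theorem eval_aeval_X_add_X (p : Polynomial R) (x y : R) :
    eval ![x, y] (p.aeval (X 0 + X 1 : MvPolynomial (Fin 2) R)) = p.eval (x + y) := by
  have hbase : (eval ![x, y]).comp (algebraMap R (MvPolynomial (Fin 2) R)) = RingHom.id R :=
    RingHom.ext fun r => eval_C r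
  rw [Polynomial.aeval_def, Polynomial.hom_eval₂, hbase, map_add, eval_X, eval_X]
  rfl

end BivariatePolynomials

section StirlingSums

open scoped Nat

theorem qd_succ_succ (d n : ℕ) :
    qd (d + 1) (n + 1) = (n + 1) * qd d (n + 1) + qd (d + 1) n := by
  simp only [qd, stirlingSecond_eq]
  rw [show n + (d + 1) = n + 1 + d by ring]
  exact Nat.stirlingSecond_succ_succ (n + 1 + d) n

theorem natCast_doubleFactorial_add_one {R : Type*} [Semiring R] (n : ℕ) :
    ((n + 1)‼ : R) = (n + 1) * (n - 1)‼ := by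
  rw [Nat.doubleFactorial_add_one, Nat.cast_mul, Nat.cast_succ]

-- For `d = 0`, truncated subtraction gives `0‼ = 1`, matching the convention `(-1)‼ = 1`.
theorem hasTopDiff_qd (d : ℕ) : HasTopDiff (fun n => (qd d n : ℚ)) (2 * d) (2 * d - 1)‼ := by
  induction d with
  | zero =>
    intro n
    simp [qd, stirlingSecond_eq, Nat.stirlingSecond_self]
  | succ d ih =>
    have hstep (n : ℕ) :
        (qd (d + 1) (n + 1) : ℚ) - qd (d + 1) n = (n + 1 : ℕ) * qd d (n + 1) := by
      rw [qd_succ_succ]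
      push_cast
      ring
    rw [show 2 * (d + 1) - 1 = 2 * d + 1 by lia, natCast_doubleFactorial_add_one, mul_add_one,
      hasTopDiff_succ_iff]
    simpa only [hstep] using ih.natCast_mul.comp_succ

theorem hasTopDiff_natCast_mul_qd (d : ℕ) :
    HasTopDiff (fun n => (n : ℚ) * (qd d n : ℚ)) (2 * d + 1) (2 * d + 1)‼ := by
  rw [natCast_doubleFactorial_add_one]
  exact (hasTopDiff_qd d).natCast_mul

theorem POne_eq_cauchyProduct (i x y : ℕ) :
    POne i x y =
      cauchyProduct (fun α => (α : ℚ) * (qd i α : ℚ)) (fun β => ((β + 1 : ℕ) : ℚ)) (x + y) := by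
  rw [cauchyProduct_eq_sum_Icc (by simp only [Nat.cast_zero, zero_mul]), POne]
  refine Finset.sum_congr rfl fun α hα => ?_
  rw [Nat.sub_add_comm (Finset.mem_Icc.mp hα).2]
  ring

theorem PTwo_eq_cauchyProduct (i j : ℕ) :
    PTwo i j = cauchyProduct (fun α => (α : ℚ) * (qd i α : ℚ))
      (cauchyProduct (fun β => (β : ℚ) * (qd j β : ℚ)) fun γ => ((γ + 1 : ℕ) : ℚ)) := by
  ext x
  rw [cauchyProduct_eq_sum_Icc (by simp only [Nat.cast_zero, zero_mul]), PTwo]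
  refine Finset.sum_congr rfl fun α hα => ?_
  rw [cauchyProduct_eq_sum_Icc (by simp only [Nat.cast_zero, zero_mul]), Finset.mul_sum]
  refine Finset.sum_congr rfl fun β hβ => ?_
  rw [Finset.mem_Icc] at hα hβ
  rw [show x + 1 - α - β = x - α - β + 1 by lia]
  ring

theorem hasTopDiff_PTwo (a b : ℕ) :
    HasTopDiff (PTwo a b) (2 * a + 2 * b + 5) ((2 * a + 1)‼ * (2 * b + 1)‼) := by
  have hprod := (hasTopDiff_natCast_mul_qd a).cauchyProduct
    ((hasTopDiff_natCast_mul_qd b).cauchyProduct hasTopDiff_natCast_succ)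
  rwa [mul_one, show 2 * a + 1 + (2 * b + 1 + 1 + 1) + 1 = 2 * a + 2 * b + 5 by ring,
    ← PTwo_eq_cauchyProduct] at hprod

theorem exists_mvPolynomial_POne (i : ℕ) :
    ∃ Q : MvPolynomial (Fin 2) ℚ, Q.totalDegree = 2 * i + 3 ∧
      (∀ x y : ℕ, MvPolynomial.eval ![(x : ℚ), (y : ℚ)] Q = POne i x y) ∧
      ∀ u v : ℕ, u + v = 2 * i + 3 →
        MvPolynomial.coeff (Finsupp.single 0 u + Finsupp.single 1 v) Q =
          ((2 * i + 1)‼ : ℚ) / (u ! * v !) := by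
  obtain ⟨p, hdeg, hcoeff, heval⟩ :=
    ((hasTopDiff_natCast_mul_qd i).cauchyProduct hasTopDiff_natCast_succ).exists_polynomial
  rw [mul_one] at hcoeff
  have hne : p.coeff (2 * i + 3) ≠ 0 := by
    have := Nat.doubleFactorial_pos (2 * i + 1)
    rw [hcoeff]
    positivity
  refine ⟨p.aeval (MvPolynomial.X 0 + MvPolynomial.X 1), ?_, fun x y => ?_, fun u v huv => ?_⟩
  · rw [totalDegree_aeval_X_add_X]
    exact Polynomial.natDegree_eq_of_le_of_coeff_ne_zero hdeg hne
  · rw [eval_aeval_X_add_X, ← Nat.cast_add, heval, POne_eq_cauchyProduct]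
  · have hcoord : (Finsupp.single 0 u + Finsupp.single 1 v : Fin 2 →₀ ℕ) 0 = u ∧
        (Finsupp.single 0 u + Finsupp.single 1 v : Fin 2 →₀ ℕ) 1 = v := by simp
    rw [coeff_aeval_X_add_X, hcoord.1, hcoord.2, huv, hcoeff, ← huv, Nat.cast_add_choose]
    have := Nat.factorial_ne_zero (u + v)
    field_simp

end StirlingSums

/-- (1) `P_i` agrees at positive integers with a two-variable polynomial of total
degree `2i+3`, whose coefficient of `x^{2a+1} y^{2b}` (for `i = a+b-1`, `a+b ≥ 1`) is
`(2a+2b-1)!!/((2a+1)!(2b)!)`; (2) `P_{i,j}` agrees at positive integers with a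
polynomial in `x` of degree `2i+2j+5`, whose leading coefficient (for `(i,j)=(a,b)`)
is `(2a+1)!!(2b+1)!!/(2a+2b+5)!`. -/
theorem POne_PTwo_polynomial :
    (∀ i : ℕ, ∃ Q : MvPolynomial (Fin 2) ℚ,
      Q.totalDegree = 2 * i + 3 ∧
      ∀ x y : ℕ, 1 ≤ x → 1 ≤ y →
        MvPolynomial.eval ![(x : ℚ), (y : ℚ)] Q = POne i x y) ∧
    (∀ a b : ℕ, 1 ≤ a + b →
      ∃ Q : MvPolynomial (Fin 2) ℚ,
        (∀ x y : ℕ, 1 ≤ x → 1 ≤ y →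
          MvPolynomial.eval ![(x : ℚ), (y : ℚ)] Q = POne (a + b - 1) x y) ∧
        MvPolynomial.coeff (Finsupp.single 0 (2 * a + 1) + Finsupp.single 1 (2 * b)) Q =
          (Nat.doubleFactorial (2 * a + 2 * b - 1) : ℚ) /
            (Nat.factorial (2 * a + 1) * Nat.factorial (2 * b))) ∧
    (∀ a b : ℕ, ∃ Q : Polynomial ℚ,
      (∀ x : ℕ, 1 ≤ x → Q.eval (x : ℚ) = PTwo a b x) ∧
      Q.degree = (2 * a + 2 * b + 5 : ℕ) ∧
      Q.coeff (2 * a + 2 * b + 5) =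
        (Nat.doubleFactorial (2 * a + 1) * Nat.doubleFactorial (2 * b + 1) : ℚ) /
          Nat.factorial (2 * a + 2 * b + 5)) := by
  refine ⟨fun i => ?_, fun a b hab => ?_, fun a b => ?_⟩
  · obtain ⟨Q, hdeg, heval, -⟩ := exists_mvPolynomial_POne i
    exact ⟨Q, hdeg, fun x y _ _ => heval x y⟩
  · obtain ⟨Q, -, heval, hcoeff⟩ := exists_mvPolynomial_POne (a + b - 1)
    refine ⟨Q, fun x y _ _ => heval x y, ?_⟩
    rw [hcoeff _ _ (by lia), show 2 * (a + b - 1) + 1 = 2 * a + 2 * b - 1 by lia]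
  · obtain ⟨Q, hdeg, hcoeff, heval⟩ := (hasTopDiff_PTwo a b).exists_polynomial
    have hne : Q.coeff (2 * a + 2 * b + 5) ≠ 0 := by
      have := Nat.doubleFactorial_pos (2 * a + 1)
      have := Nat.doubleFactorial_pos (2 * b + 1)
      rw [hcoeff]
      positivity
    exact ⟨Q, fun x _ => heval x, (Polynomial.natDegree_le_iff_degree_le.mp hdeg).antisymm
      (Polynomial.le_degree_of_ne_zero hne), hcoeff⟩
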